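/- Let N ≥ 2, μ₁ ∈ ℝ, μ₂ ≥ -(N-2-μ₁)²/4, r > 0, and let g ∈ C^β_loc(B_r \ {0}) for some β ∈ (0,1) be a nonnegative function such that g(x) ≥ c|x|^{τ-2} in B_r \ {0} for some constant c > 0 and some τ ∈ (τ₋, τ₊). If u ∈ C²(B_r \ {0}) is a positive function satisfying ℒ_{μ₁,μ₂}u ≥ g in B_r \ {0} and u ≥ 0 on ∂B_r, then there exists c₁ > 0 such that u(x) ≥ c₁|x|^{τ} for all x ∈ B_{r/2} \ {0}. -/

import Mathlib

/-!
For `σ = τ₋` the power `|x|^σ` is annihilated by `ℒ`, while `ℒ|x|^τ = (τ₊ - τ)(τ - τ₋)|x|^(τ-2)` is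
positive. The strict supersolution `|x|^τ` gives a comparison principle whatever the sign of `μ₂`:
if `ℒw ≥ 0` and `w` is nonnegative on the boundary but negative somewhere, then `w/|x|^τ` attains a
negative minimum `t` at an interior point; there `w - t|x|^τ` has a local minimum with value zero,
so `ℒ(w - t|x|^τ) ≤ 0`, although `ℒw ≥ 0` and `-tℒ|x|^τ > 0`.

On the annulus `ρ ≤ |x| ≤ R` this applies to `w = u + ερ^(τ-σ)|x|^σ - ε|x|^τ`: for small `ε` it is
nonnegative on the outer sphere because `u` is positive there, and on the inner one because the two
powers cancel. As `ρ → 0` the correction `ερ^(τ-σ)|x|^σ` disappears, since `τ > σ`.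
-/

open MeasureTheory Filter Metric Set Topology

noncomputable section

/-- Euclidean space `ℝ^N`. -/
abbrev E (N : ℕ) := EuclideanSpace ℝ (Fin N)

/-- The Laplacian, as the sum of second derivatives in the coordinate directions. -/
def lap (N : ℕ) (u : E N → ℝ) (x : E N) : ℝ :=
  ∑ i, fderiv ℝ (fun y => fderiv ℝ u y (EuclideanSpace.single i 1)) x (EuclideanSpace.single i 1)

/-- The CKN operator `ℒ_{μ₁,μ₂} u = -Δu + μ₁|x|⁻² x·∇u + μ₂|x|⁻² u`. -/
def ckn (N : ℕ) (μ₁ μ₂ : ℝ) (u : E N → ℝ) (x : E N) : ℝ :=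
  -lap N u x + μ₁ / ‖x‖ ^ 2 * fderiv ℝ u x x + μ₂ / ‖x‖ ^ 2 * u x

/-- `τ₊(μ₁,μ₂)`. -/
def tauPlus (N : ℕ) (μ₁ μ₂ : ℝ) : ℝ :=
  ((2 - (N : ℝ) + μ₁) + Real.sqrt ((2 - (N : ℝ) + μ₁) ^ 2 + 4 * μ₂)) / 2

/-- `τ₋(μ₁,μ₂)`. -/
def tauMinus (N : ℕ) (μ₁ μ₂ : ℝ) : ℝ :=
  ((2 - (N : ℝ) + μ₁) - Real.sqrt ((2 - (N : ℝ) + μ₁) ^ 2 + 4 * μ₂)) / 2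

/-- Surface measure of the unit sphere `𝕊^{N-1}` in `ℝ^N`. -/
def sphereArea (N : ℕ) : ℝ := N * (volume (ball (0 : E N) 1)).toReal

/-- Local β-Hölder continuity of `f` on a set `s`. -/
def LocHolderOn (N : ℕ) (β : ℝ) (f : E N → ℝ) (s : Set (E N)) : Prop :=
  ∀ x ∈ s, ∃ t ∈ nhdsWithin x s, ∃ C : NNReal, HolderOnWith C β.toNNReal f t

open Laplacian InnerProductSpace

theorem deriv_deriv_nonneg_of_isLocalMin {f : ℝ → ℝ} {a : ℝ} (hmin : IsLocalMin f a)
    (hf : ContinuousAt f a) : 0 ≤ deriv (deriv f) a := by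
  by_contra! hneg
  have hmax : IsLocalMax f a := isLocalMax_of_deriv_deriv_neg hneg hmin.deriv_eq_zero hf
  have hconst : f =ᶠ[𝓝 a] fun _ => f a := by
    filter_upwards [hmin, hmax] with y hge hle using le_antisymm hle hge
  have hzero : deriv (deriv f) a = 0 := by simpa using hconst.deriv.deriv_eq
  exact hneg.ne hzero

section NormedSpace

variable {F : Type*} [NormedAddCommGroup F] [NormedSpace ℝ F]

theorem deriv_deriv_comp_add_smul {f : F → ℝ} {x : F} (hf : ContDiffAt ℝ 2 f x) (v : F) :
    deriv (deriv fun t : ℝ => f (x + t • v)) 0 = fderiv ℝ (fderiv ℝ f) x v v := by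
  have hline (t : ℝ) : HasDerivAt (fun t : ℝ => x + t • v) v t := by
    simpa using ((hasDerivAt_id t).smul_const v).const_add x
  have hline_zero : Tendsto (fun t : ℝ => x + t • v) (𝓝 0) (𝓝 x) := by
    simpa using (hline 0).continuousAt.tendsto
  have hfirst : deriv (fun t : ℝ => f (x + t • v)) =ᶠ[𝓝 0] fun t => fderiv ℝ f (x + t • v) v := by
    filter_upwards [hline_zero.eventually (hf.eventually (by simp))] with t ht
    exact ((ht.differentiableAt two_ne_zero).hasFDerivAt.comp_hasDerivAt t (hline t)).deriv
  have hsecond : HasFDerivAt (fderiv ℝ f) (fderiv ℝ (fderiv ℝ f) x) (x + (0 : ℝ) • v) := by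
    have hf' : ContDiffAt ℝ 1 (fderiv ℝ f) x := hf.fderiv_right (by norm_num)
    simpa using (hf'.differentiableAt one_ne_zero).hasFDerivAt
  have hderiv : HasDerivAt (fun t : ℝ => fderiv ℝ f (x + t • v)) (fderiv ℝ (fderiv ℝ f) x v) 0 :=
    hsecond.comp_hasDerivAt 0 (hline 0)
  rw [hfirst.deriv_eq]
  simpa using (hderiv.clm_apply (hasDerivAt_const 0 v)).deriv

theorem fderiv_fderiv_apply_self_nonneg_of_isLocalMin {f : F → ℝ} {x : F}
    (hf : ContDiffAt ℝ 2 f x) (hmin : IsLocalMin f x) (v : F) :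
    0 ≤ fderiv ℝ (fderiv ℝ f) x v v := by
  have hline : ContinuousAt (fun t : ℝ => x + t • v) 0 := by fun_prop
  have hline_zero : Tendsto (fun t : ℝ => x + t • v) (𝓝 0) (𝓝 x) := by
    simpa using hline.tendsto
  rw [← deriv_deriv_comp_add_smul hf]
  apply deriv_deriv_nonneg_of_isLocalMin
  · filter_upwards [hline_zero.eventually hmin] with t ht
    simpa using ht
  · exact ContinuousAt.comp_of_eq hf.continuousAt hline (by simp)

end NormedSpace

section InnerProductSpace

variable {F : Type*} [NormedAddCommGroup F] [InnerProductSpace ℝ F]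

theorem contDiffAt_norm_rpow {n : WithTop ℕ∞} (s : ℝ) {x : F} (hx : x ≠ 0) :
    ContDiffAt ℝ n (fun y : F => ‖y‖ ^ s) x :=
  (contDiffAt_norm ℝ hx).rpow_const_of_ne (norm_ne_zero_iff.2 hx)

theorem hasFDerivAt_norm_rpow_of_ne_zero (s : ℝ) {x : F} (hx : x ≠ 0) :
    HasFDerivAt (fun y : F => ‖y‖ ^ s) ((s * ‖x‖ ^ (s - 2)) • innerSL ℝ x) x := by
  have hpow (y : F) (p : ℝ) : (‖y‖ ^ 2) ^ p = ‖y‖ ^ (2 * p) := by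
    exact_mod_cast (Real.rpow_natCast_mul (norm_nonneg y) 2 p).symm
  have hsq : HasFDerivAt (fun y : F => (‖y‖ ^ 2) ^ (s / 2))
      ((s / 2 * (‖x‖ ^ 2) ^ (s / 2 - 1)) • 2 • innerSL ℝ x) x :=
    (hasStrictFDerivAt_norm_sq x).hasFDerivAt.rpow_const
      (Or.inl (pow_ne_zero 2 (norm_ne_zero_iff.2 hx)))
  convert! hsq using 1
  · simp_rw [hpow, mul_div_cancel₀ s (two_ne_zero' ℝ)]
  · rw [hpow, show 2 * (s / 2 - 1) = s - 2 by ring, ← Nat.cast_smul_eq_nsmul ℝ, smul_smul]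
    congr 1
    push_cast
    ring

theorem fderiv_fderiv_norm_rpow_apply (s : ℝ) {x : F} (hx : x ≠ 0) (v w : F) :
    fderiv ℝ (fderiv ℝ fun y : F => ‖y‖ ^ s) x v w =
      s * ((s - 2) * ‖x‖ ^ (s - 4) * inner ℝ x v * inner ℝ x w + ‖x‖ ^ (s - 2) * inner ℝ v w) := by
  have hfirst : fderiv ℝ (fun y : F => ‖y‖ ^ s) =ᶠ[𝓝 x]
      fun y => (s * ‖y‖ ^ (s - 2)) • innerSL ℝ y := by
    filter_upwards [isOpen_ne.mem_nhds hx] with y hy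
    exact (hasFDerivAt_norm_rpow_of_ne_zero s hy).fderiv
  let L : F →L[ℝ] F →L[ℝ] ℝ := innerSL ℝ
  have hL (y z : F) : L y z = inner ℝ y z := innerSL_apply_apply ℝ y z
  have hsecond : HasFDerivAt (fun y => (s * ‖y‖ ^ (s - 2)) • innerSL ℝ y)
      ((s * ‖x‖ ^ (s - 2)) • L + (s • ((s - 2) * ‖x‖ ^ (s - 2 - 2)) • L x).smulRight (L x)) x :=
    ((hasFDerivAt_norm_rpow_of_ne_zero (s - 2) hx).const_mul s).fun_smul L.hasFDerivAt
  rw [hfirst.fderiv_eq, hsecond.fderiv, show s - 2 - 2 = s - 4 by ring]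
  simp only [_root_.add_apply, _root_.smul_apply, ContinuousLinearMap.smulRight_apply, hL,
    smul_eq_mul]
  ring

variable [FiniteDimensional ℝ F]

theorem laplacian_nonneg_of_isLocalMin {f : F → ℝ} {x : F} (hf : ContDiffAt ℝ 2 f x)
    (hmin : IsLocalMin f x) : 0 ≤ Δ f x := by
  rw [laplacian_eq_iteratedFDeriv_stdOrthonormalBasis]
  refine Finset.sum_nonneg fun i _ => ?_
  rw [iteratedFDeriv_two_apply]
  exact fderiv_fderiv_apply_self_nonneg_of_isLocalMin hf hmin (stdOrthonormalBasis ℝ F i)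

theorem laplacian_norm_rpow (s : ℝ) {x : F} (hx : x ≠ 0) :
    Δ (fun y : F => ‖y‖ ^ s) x = s * (s + Module.finrank ℝ F - 2) * ‖x‖ ^ (s - 2) := by
  let b := stdOrthonormalBasis ℝ F
  have hpow : ‖x‖ ^ (s - 4) * ‖x‖ ^ 2 = ‖x‖ ^ (s - 2) := by
    rw [← Real.rpow_add_natCast (norm_ne_zero_iff.2 hx)]
    congr 1
    push_cast
    ring
  have hterm (i) : iteratedFDeriv ℝ 2 (fun y : F => ‖y‖ ^ s) x ![b i, b i] =
      s * (s - 2) * ‖x‖ ^ (s - 4) * inner ℝ x (b i) ^ 2 + s * ‖x‖ ^ (s - 2) := by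
    simp only [iteratedFDeriv_two_apply, Matrix.cons_val_zero, Matrix.cons_val_one,
      fderiv_fderiv_norm_rpow_apply s hx, real_inner_self_eq_norm_sq, b.norm_eq_one]
    ring
  calc Δ (fun y : F => ‖y‖ ^ s) x
      = ∑ i, (s * (s - 2) * ‖x‖ ^ (s - 4) * inner ℝ x (b i) ^ 2 + s * ‖x‖ ^ (s - 2)) := by
        simp only [laplacian_eq_iteratedFDeriv_orthonormalBasis _ b, hterm]
    _ = s * (s - 2) * (‖x‖ ^ (s - 4) * ‖x‖ ^ 2) + Module.finrank ℝ F * (s * ‖x‖ ^ (s - 2)) := by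
        rw [Finset.sum_add_distrib, ← Finset.mul_sum, b.sum_sq_inner_left]
        simp only [Finset.sum_const, Finset.card_univ, Fintype.card_fin, nsmul_eq_mul]
        ring
    _ = s * (s + Module.finrank ℝ F - 2) * ‖x‖ ^ (s - 2) := by
        rw [hpow]
        ring

end InnerProductSpace

theorem frontier_closedBall_diff_ball_subset {X : Type*} [PseudoMetricSpace X] (x : X) (R ρ : ℝ) :
    frontier (closedBall x R \ ball x ρ) ⊆ sphere x R ∪ sphere x ρ := by
  refine (frontier_inter_subset _ _).trans (union_subset_union ?_ ?_)
  · exact inter_subset_left.trans frontier_closedBall_subset_sphere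
  · exact inter_subset_right.trans ((frontier_compl _).trans_subset frontier_ball_subset_sphere)

section CKN

variable {N : ℕ} {μ₁ μ₂ : ℝ} {u v : E N → ℝ} {x : E N}

theorem lap_eq_laplacian (hu : DifferentiableAt ℝ (fderiv ℝ u) x) : lap N u x = Δ u x := by
  rw [laplacian_eq_iteratedFDeriv_orthonormalBasis u (EuclideanSpace.basisFun (Fin N) ℝ)]
  refine Finset.sum_congr rfl fun i _ => ?_
  have hcoord := hu.hasFDerivAt.clm_apply
    (hasFDerivAt_const (EuclideanSpace.single i (1 : ℝ) : E N) x)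
  simp [iteratedFDeriv_two_apply, hcoord.fderiv]

theorem ckn_eq_laplacian (hu : ContDiffAt ℝ 2 u x) :
    ckn N μ₁ μ₂ u x =
      -Δ u x + μ₁ / ‖x‖ ^ 2 * fderiv ℝ u x x + μ₂ / ‖x‖ ^ 2 * u x := by
  have hu' : ContDiffAt ℝ 1 (fderiv ℝ u) x := hu.fderiv_right (by norm_num)
  rw [ckn, lap_eq_laplacian (hu'.differentiableAt one_ne_zero)]

theorem ckn_add (hu : ContDiffAt ℝ 2 u x) (hv : ContDiffAt ℝ 2 v x) :
    ckn N μ₁ μ₂ (fun y => u y + v y) x = ckn N μ₁ μ₂ u x + ckn N μ₁ μ₂ v x := by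
  have hΔ : Δ (fun y => u y + v y) x = Δ u x + Δ v x := hu.laplacian_add hv
  rw [ckn_eq_laplacian hu, ckn_eq_laplacian hv, ckn_eq_laplacian (hu.add hv), hΔ,
    fderiv_fun_add (hu.differentiableAt two_ne_zero) (hv.differentiableAt two_ne_zero),
    _root_.add_apply]
  ring

theorem ckn_const_mul (a : ℝ) (hu : ContDiffAt ℝ 2 u x) :
    ckn N μ₁ μ₂ (fun y => a * u y) x = a * ckn N μ₁ μ₂ u x := by
  have hΔ : Δ (fun y => a * u y) x = a * Δ u x := laplacian_smul a hu
  rw [ckn_eq_laplacian hu, ckn_eq_laplacian (contDiffAt_const.mul hu), hΔ,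
    fderiv_const_mul (hu.differentiableAt two_ne_zero), _root_.smul_apply, smul_eq_mul]
  ring

theorem ckn_sub (hu : ContDiffAt ℝ 2 u x) (hv : ContDiffAt ℝ 2 v x) :
    ckn N μ₁ μ₂ (fun y => u y - v y) x = ckn N μ₁ μ₂ u x - ckn N μ₁ μ₂ v x := by
  have hneg : (fun y => u y - v y) = fun y => u y + -1 * v y := by
    funext y
    ring
  rw [hneg, ckn_add hu (contDiffAt_const.mul hv), ckn_const_mul _ hv]
  ring

theorem ckn_nonpos_of_isLocalMin_of_eq_zero (hu : ContDiffAt ℝ 2 u x) (hmin : IsLocalMin u x)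
    (hzero : u x = 0) : ckn N μ₁ μ₂ u x ≤ 0 := by
  rw [ckn_eq_laplacian hu, hmin.fderiv_eq_zero, hzero]
  simpa using laplacian_nonneg_of_isLocalMin hu hmin

theorem pos_of_nonneg_of_ckn_pos (hu : ContDiffAt ℝ 2 u x) (hnonneg : ∀ᶠ y in 𝓝 x, 0 ≤ u y)
    (hckn : 0 < ckn N μ₁ μ₂ u x) : 0 < u x := by
  by_contra! hle
  have hzero : u x = 0 := le_antisymm hle hnonneg.self_of_nhds
  have hmin : IsLocalMin u x := by
    filter_upwards [hnonneg] with y hy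
    rwa [hzero]
  exact hckn.not_ge (ckn_nonpos_of_isLocalMin_of_eq_zero hu hmin hzero)

theorem nonneg_of_ckn_nonneg_of_frontier {K : Set (E N)} {φ w : E N → ℝ} (hK : IsCompact K)
    (hφ : ContinuousOn φ K) (hw : ContinuousOn w K)
    (hφ2 : ∀ x ∈ interior K, ContDiffAt ℝ 2 φ x) (hw2 : ∀ x ∈ interior K, ContDiffAt ℝ 2 w x)
    (hφpos : ∀ x ∈ K, 0 < φ x) (hφckn : ∀ x ∈ interior K, 0 < ckn N μ₁ μ₂ φ x)
    (hwckn : ∀ x ∈ interior K, 0 ≤ ckn N μ₁ μ₂ w x) (hfrontier : ∀ x ∈ frontier K, 0 ≤ w x) :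
    ∀ x ∈ K, 0 ≤ w x := by
  intro z hz
  by_contra! hneg
  obtain ⟨x₀, hx₀, hmin⟩ :=
    hK.exists_isMinOn ⟨z, hz⟩ (hw.div hφ fun x hx => (hφpos x hx).ne')
  set t := w x₀ / φ x₀
  have ht_le (x) (hx : x ∈ K) : t * φ x ≤ w x := (le_div_iff₀ (hφpos x hx)).1 (hmin hx)
  have ht_eq : t * φ x₀ = w x₀ := div_mul_cancel₀ _ (hφpos x₀ hx₀).ne'
  have ht_neg : t < 0 := (hmin hz).trans_lt (div_neg_of_neg_of_pos hneg (hφpos z hz))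
  have hint : x₀ ∈ interior K := by
    by_contra hx₀'
    have : 0 ≤ w x₀ := hfrontier x₀ ⟨subset_closure hx₀, hx₀'⟩
    exact ht_neg.not_ge (div_nonneg this (hφpos x₀ hx₀).le)
  have hlocalMin : IsLocalMin (fun y => w y - t * φ y) x₀ := by
    filter_upwards [mem_interior_iff_mem_nhds.1 hint] with x hx
    simpa [ht_eq] using ht_le x hx
  have htφ : ContDiffAt ℝ 2 (fun y => t * φ y) x₀ := contDiffAt_const.mul (hφ2 x₀ hint)
  have hle : ckn N μ₁ μ₂ (fun y => w y - t * φ y) x₀ ≤ 0 :=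
    ckn_nonpos_of_isLocalMin_of_eq_zero ((hw2 x₀ hint).sub htφ) hlocalMin
      (by simp [ht_eq])
  rw [ckn_sub (hw2 x₀ hint) htφ, ckn_const_mul t (hφ2 x₀ hint)] at hle
  linarith [hwckn x₀ hint, mul_neg_of_neg_of_pos ht_neg (hφckn x₀ hint)]

theorem tauMinus_lt_tauPlus_iff :
    tauMinus N μ₁ μ₂ < tauPlus N μ₁ μ₂ ↔ 0 < (2 - (N : ℝ) + μ₁) ^ 2 + 4 * μ₂ := by
  rw [← Real.sqrt_pos, tauMinus, tauPlus]
  constructor <;> intro h <;> linarith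

theorem tauPlus_sub_mul_sub_tauMinus (h : 0 ≤ (2 - (N : ℝ) + μ₁) ^ 2 + 4 * μ₂) (s : ℝ) :
    (tauPlus N μ₁ μ₂ - s) * (s - tauMinus N μ₁ μ₂) = μ₂ + (2 - N + μ₁) * s - s ^ 2 := by
  rw [tauMinus, tauPlus]
  linear_combination Real.sq_sqrt h / 4

theorem ckn_norm_rpow (h : 0 ≤ (2 - (N : ℝ) + μ₁) ^ 2 + 4 * μ₂) (s : ℝ) (hx : x ≠ 0) :
    ckn N μ₁ μ₂ (fun y => ‖y‖ ^ s) x =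
      (tauPlus N μ₁ μ₂ - s) * (s - tauMinus N μ₁ μ₂) * ‖x‖ ^ (s - 2) := by
  have hnorm : ‖x‖ ≠ 0 := norm_ne_zero_iff.2 hx
  have hpow : ‖x‖ ^ s = ‖x‖ ^ (s - 2) * ‖x‖ ^ 2 := by
    rw [← Real.rpow_add_natCast hnorm]
    norm_num
  rw [ckn_eq_laplacian (contDiffAt_norm_rpow s hx), laplacian_norm_rpow s hx,
    (hasFDerivAt_norm_rpow_of_ne_zero s hx).fderiv, tauPlus_sub_mul_sub_tauMinus h]
  simp only [finrank_euclideanSpace_fin, _root_.smul_apply, innerSL_apply_apply,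
    real_inner_self_eq_norm_sq, smul_eq_mul, hpow]
  field_simp
  ring

theorem ckn_norm_rpow_tauMinus (h : 0 ≤ (2 - (N : ℝ) + μ₁) ^ 2 + 4 * μ₂) (hx : x ≠ 0) :
    ckn N μ₁ μ₂ (fun y => ‖y‖ ^ tauMinus N μ₁ μ₂) x = 0 := by
  rw [ckn_norm_rpow h _ hx, sub_self, mul_zero, zero_mul]

theorem ckn_norm_rpow_pos {τ : ℝ} (hτ : τ ∈ Ioo (tauMinus N μ₁ μ₂) (tauPlus N μ₁ μ₂))
    (hx : x ≠ 0) : 0 < ckn N μ₁ μ₂ (fun y => ‖y‖ ^ τ) x := by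
  rw [ckn_norm_rpow (tauMinus_lt_tauPlus_iff.1 (hτ.1.trans hτ.2)).le τ hx]
  exact mul_pos (mul_pos (sub_pos.2 hτ.2) (sub_pos.2 hτ.1))
    (Real.rpow_pos_of_pos (norm_pos_iff.2 hx) _)

theorem contDiffAt_add_norm_rpow_sub_norm_rpow {n : WithTop ℕ∞} (a b s t : ℝ)
    (hu : ContDiffAt ℝ n u x) (hx : x ≠ 0) :
    ContDiffAt ℝ n (fun y => u y + a * ‖y‖ ^ s - b * ‖y‖ ^ t) x :=
  (hu.add (contDiffAt_const.mul (contDiffAt_norm_rpow s hx))).sub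
    (contDiffAt_const.mul (contDiffAt_norm_rpow t hx))

theorem ckn_add_norm_rpow_tauMinus_sub_norm_rpow
    (h : 0 ≤ (2 - (N : ℝ) + μ₁) ^ 2 + 4 * μ₂) (a b t : ℝ)
    (hu : ContDiffAt ℝ 2 u x) (hx : x ≠ 0) :
    ckn N μ₁ μ₂ (fun y => u y + a * ‖y‖ ^ tauMinus N μ₁ μ₂ - b * ‖y‖ ^ t) x =
      ckn N μ₁ μ₂ u x - b * ckn N μ₁ μ₂ (fun y => ‖y‖ ^ t) x := by
  have hpow (s : ℝ) : ContDiffAt ℝ 2 (fun y : E N => ‖y‖ ^ s) x := contDiffAt_norm_rpow s hx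
  have hcpow (c s : ℝ) : ContDiffAt ℝ 2 (fun y : E N => c * ‖y‖ ^ s) x :=
    contDiffAt_const.mul (hpow s)
  rw [ckn_sub (hu.add (hcpow a _)) (hcpow b t), ckn_add hu (hcpow a _), ckn_const_mul a (hpow _),
    ckn_const_mul b (hpow t), ckn_norm_rpow_tauMinus h hx, mul_zero, add_zero]

section LowerBound

variable {τ ε R : ℝ}

theorem mul_norm_rpow_le_add_of_le_ckn {ρ : ℝ} (hρ : 0 < ρ)
    (hτ : τ ∈ Ioo (tauMinus N μ₁ μ₂) (tauPlus N μ₁ μ₂)) (hε : 0 ≤ ε)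
    (hu : ∀ x ∈ closedBall (0 : E N) R \ {0}, ContDiffAt ℝ 2 u x)
    (hnonneg : ∀ x ∈ closedBall (0 : E N) R \ {0}, 0 ≤ u x)
    (hckn : ∀ x ∈ closedBall (0 : E N) R \ {0},
      ε * ckn N μ₁ μ₂ (fun y => ‖y‖ ^ τ) x ≤ ckn N μ₁ μ₂ u x)
    (hsphere : ∀ x ∈ sphere (0 : E N) R, ε * ‖x‖ ^ τ ≤ u x) :
    ∀ x ∈ closedBall (0 : E N) R \ ball 0 ρ,
      ε * ‖x‖ ^ τ ≤ u x + ε * ρ ^ (τ - tauMinus N μ₁ μ₂) * ‖x‖ ^ tauMinus N μ₁ μ₂ := by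
  set σ := tauMinus N μ₁ μ₂
  set K : Set (E N) := closedBall 0 R \ ball 0 ρ
  set w : E N → ℝ := fun y => u y + ε * ρ ^ (τ - σ) * ‖y‖ ^ σ - ε * ‖y‖ ^ τ
  have hdisc := (tauMinus_lt_tauPlus_iff.1 (hτ.1.trans hτ.2)).le
  have hK : IsCompact K := (isCompact_closedBall 0 R).diff isOpen_ball
  have hKsub {x} (hx : x ∈ K) : x ∈ closedBall 0 R \ {0} :=
    ⟨hx.1, fun hx0 => hx.2 (mem_singleton_iff.1 hx0 ▸ mem_ball_self hρ)⟩
  have hpow {x} (hx : x ∈ K) : ContDiffAt ℝ 2 (fun y : E N => ‖y‖ ^ τ) x :=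
    contDiffAt_norm_rpow τ (hKsub hx).2
  have hw {x} (hx : x ∈ K) : ContDiffAt ℝ 2 w x :=
    contDiffAt_add_norm_rpow_sub_norm_rpow _ _ _ _ (hu x (hKsub hx)) (hKsub hx).2
  have hwckn {x} (hx : x ∈ K) : 0 ≤ ckn N μ₁ μ₂ w x := by
    rw [ckn_add_norm_rpow_tauMinus_sub_norm_rpow hdisc _ _ _ (hu x (hKsub hx)) (hKsub hx).2]
    exact sub_nonneg.2 (hckn x (hKsub hx))
  have hfrontier {x} (hx : x ∈ frontier K) : 0 ≤ w x := by
    have hux : 0 ≤ u x := hnonneg x (hKsub (hK.isClosed.frontier_subset hx))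
    refine sub_nonneg.2 ?_
    rcases frontier_closedBall_diff_ball_subset _ _ _ hx with hxR | hxρ
    · exact (hsphere x hxR).trans (le_add_of_nonneg_right (by positivity))
    · rw [mem_sphere_zero_iff_norm.1 hxρ, mul_assoc, ← Real.rpow_add hρ, sub_add_cancel]
      exact le_add_of_nonneg_left hux
  intro x hx
  exact sub_nonneg.1 <| nonneg_of_ckn_nonneg_of_frontier hK
    (fun y hy => (hpow hy).continuousAt.continuousWithinAt)
    (fun y hy => (hw hy).continuousAt.continuousWithinAt)
    (fun y hy => hpow (interior_subset hy)) (fun y hy => hw (interior_subset hy))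
    (fun y hy => Real.rpow_pos_of_pos (norm_pos_iff.2 (hKsub hy).2) _)
    (fun y hy => ckn_norm_rpow_pos hτ (hKsub (interior_subset hy)).2)
    (fun y hy => hwckn (interior_subset hy)) (fun y hy => hfrontier hy) x hx

theorem mul_norm_rpow_le_of_le_ckn
    (hτ : τ ∈ Ioo (tauMinus N μ₁ μ₂) (tauPlus N μ₁ μ₂)) (hε : 0 ≤ ε)
    (hu : ∀ x ∈ closedBall (0 : E N) R \ {0}, ContDiffAt ℝ 2 u x)
    (hnonneg : ∀ x ∈ closedBall (0 : E N) R \ {0}, 0 ≤ u x)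
    (hckn : ∀ x ∈ closedBall (0 : E N) R \ {0},
      ε * ckn N μ₁ μ₂ (fun y => ‖y‖ ^ τ) x ≤ ckn N μ₁ μ₂ u x)
    (hsphere : ∀ x ∈ sphere (0 : E N) R, ε * ‖x‖ ^ τ ≤ u x) :
    ∀ x ∈ closedBall (0 : E N) R \ {0}, ε * ‖x‖ ^ τ ≤ u x := by
  intro x hx
  set σ := tauMinus N μ₁ μ₂
  have hpow : Tendsto (fun ρ : ℝ => ρ ^ (τ - σ)) (𝓝[>] 0) (𝓝 0) := by
    have hcont := Real.continuousAt_rpow_const 0 (τ - σ) (Or.inr (sub_nonneg.2 hτ.1.le))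
    rw [ContinuousAt, Real.zero_rpow (sub_pos.2 hτ.1).ne'] at hcont
    exact hcont.mono_left nhdsWithin_le_nhds
  have hlim : Tendsto (fun ρ : ℝ => u x + ε * ρ ^ (τ - σ) * ‖x‖ ^ σ) (𝓝[>] 0) (𝓝 (u x)) := by
    simpa using ((hpow.const_mul ε).mul_const (‖x‖ ^ σ)).const_add (u x)
  refine ge_of_tendsto hlim ?_
  filter_upwards [Ioc_mem_nhdsGT (norm_pos_iff.2 hx.2)] with ρ hρ
  exact mul_norm_rpow_le_add_of_le_ckn hρ.1 hτ hε hu hnonneg hckn hsphere x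
    ⟨hx.1, by simpa using hρ.2⟩

end LowerBound

end CKN

theorem stmt7_general (N : ℕ) (μ₁ μ₂ τ : ℝ)
    (hτ : τ ∈ Ioo (tauMinus N μ₁ μ₂) (tauPlus N μ₁ μ₂)) (c : ℝ) (hc : 0 < c)
    (r R : ℝ) (hR : 0 < R) (hRr : R < r) (u : E N → ℝ)
    (hu : ContDiffOn ℝ 2 u (ball (0 : E N) r \ {0}))
    (hnonneg : ∀ x ∈ ball (0 : E N) r \ {0}, 0 ≤ u x)
    (hsuper : ∀ x ∈ ball (0 : E N) r \ {0}, c * ‖x‖ ^ (τ - 2) ≤ ckn N μ₁ μ₂ u x) :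
    ∃ c₁ > (0 : ℝ), ∀ x ∈ closedBall (0 : E N) R \ {0}, c₁ * ‖x‖ ^ τ ≤ u x := by
  have hopen : IsOpen (ball (0 : E N) r \ {0}) := isOpen_ball.sdiff isClosed_singleton
  have hsub : closedBall (0 : E N) R \ {0} ⊆ ball 0 r \ {0} :=
    sdiff_subset_sdiff_left (closedBall_subset_ball hRr)
  have hu' (x) (hx : x ∈ ball (0 : E N) r \ {0}) : ContDiffAt ℝ 2 u x :=
    hu.contDiffAt (hopen.mem_nhds hx)
  have hsphere : sphere (0 : E N) R ⊆ ball 0 r \ {0} := fun x hx =>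
    hsub ⟨sphere_subset_closedBall hx, ne_of_mem_sphere hx hR.ne'⟩
  have hpos (x) (hx : x ∈ ball (0 : E N) r \ {0}) : 0 < u x :=
    pos_of_nonneg_of_ckn_pos (hu' x hx) (by filter_upwards [hopen.mem_nhds hx] using hnonneg)
      ((mul_pos hc (Real.rpow_pos_of_pos (norm_pos_iff.2 hx.2) _)).trans_le (hsuper x hx))
  obtain ⟨m, hm, hmu⟩ := (isCompact_sphere (0 : E N) R).exists_forall_le'
    (hu.continuousOn.mono hsphere) fun x hx => hpos x (hsphere hx)
  set d := (tauPlus N μ₁ μ₂ - τ) * (τ - tauMinus N μ₁ μ₂)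
  have hd : 0 < d := mul_pos (sub_pos.2 hτ.2) (sub_pos.2 hτ.1)
  have hRτ : 0 < R ^ τ := Real.rpow_pos_of_pos hR τ
  have hεpos : 0 < min (c / d) (m / R ^ τ) := lt_min (div_pos hc hd) (div_pos hm hRτ)
  refine ⟨min (c / d) (m / R ^ τ), hεpos,
    mul_norm_rpow_le_of_le_ckn hτ hεpos.le (fun x hx => hu' x (hsub hx))
      (fun x hx => hnonneg x (hsub hx)) (fun x hx => ?_) fun x hx => ?_⟩
  · rw [ckn_norm_rpow (tauMinus_lt_tauPlus_iff.1 (hτ.1.trans hτ.2)).le τ hx.2, ← mul_assoc]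
    refine le_trans ?_ (hsuper x (hsub hx))
    gcongr
    exact (le_div_iff₀ hd).1 (min_le_left _ _)
  · rw [mem_sphere_zero_iff_norm.1 hx]
    exact ((le_div_iff₀ hRτ).1 (min_le_right _ _)).trans (hmu x hx)

/-- lower bound `u ≥ c₁|x|^τ` for positive supersolutions of
`ℒ_{μ₁,μ₂} u ≥ g` with `g(x) ≥ c|x|^{τ-2}`, `τ ∈ (τ₋, τ₊)`. -/
theorem stmt7 (N : ℕ) (hN : 2 ≤ N) (μ₁ μ₂ : ℝ)
    (hμ₂ : -((N : ℝ) - 2 - μ₁) ^ 2 / 4 ≤ μ₂)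
    (r : ℝ) (hr : 0 < r) (β : ℝ) (hβ : β ∈ Set.Ioo (0 : ℝ) 1)
    (g : E N → ℝ) (hgreg : LocHolderOn N β g (ball (0 : E N) r \ {0}))
    (hgpos : ∀ x ∈ ball (0 : E N) r \ {0}, 0 ≤ g x)
    (τ : ℝ) (hτ : τ ∈ Set.Ioo (tauMinus N μ₁ μ₂) (tauPlus N μ₁ μ₂))
    (c : ℝ) (hc : 0 < c)
    (hglow : ∀ x ∈ ball (0 : E N) r \ {0}, c * ‖x‖ ^ (τ - 2) ≤ g x)
    (u : E N → ℝ) (hu : ContDiffOn ℝ 2 u (ball (0 : E N) r \ {0}))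
    (hupos : ∀ x ∈ ball (0 : E N) r \ {0}, 0 < u x)
    (hsuper : ∀ x ∈ ball (0 : E N) r \ {0}, g x ≤ ckn N μ₁ μ₂ u x)
    (hbdry : ∀ x ∈ sphere (0 : E N) r, 0 ≤ u x) :
    ∃ c₁ > (0 : ℝ), ∀ x ∈ ball (0 : E N) (r / 2) \ {0}, c₁ * ‖x‖ ^ τ ≤ u x := by
  obtain ⟨c₁, hc₁, hbound⟩ := stmt7_general N μ₁ μ₂ τ hτ c hc r (r / 2) (half_pos hr)
    (half_lt_self hr) u hu (fun x hx => (hupos x hx).le)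
    fun x hx => (hglow x hx).trans (hsuper x hx)
  exact ⟨c₁, hc₁, fun x hx => hbound x ⟨ball_subset_closedBall hx.1, hx.2⟩⟩
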